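/- Anti-unification modulo absorption theories is of type infinitary: for all terms s and t, a minimal complete set of Abs-generalizations of s and t exists; and, for a signature containing an absorption pair (f, ε_f), a binary symbol g, a unary symbol h, and a constant a (all distinct from ε_f and from each other), every minimal complete set of Abs-generalizations of s' = g(ε_f, f(a, h(ε_f))) and t' = g(f(h(ε_f), a), ε_f) is infinite. -/

import Mathlib

/-!
Orient the absorption axioms as rewrite rules `f(ε_f, x) → ε_f` and `f(x, ε_f) → ε_f`. The normal
form `nf` computed bottom-up decides `≈_Abs` (`absEq_iff`), so everything below is phrased through
equality of normal forms.

**Existence.** A minimal complete set exists as soon as every generalization lies below a maximal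
one (`exists_maximal`): take one representative of each equivalence class of maximal
generalizations. Ascending chains of generalizations can be infinite, because absorption hides
arbitrarily large subterms, so a measure is needed that ignores hidden material.
Two ingredients provide it.

* Call a generalization *tight* if no generalization above it has fewer variables. Every
  generalization lies below a tight one, and in a tight generalization no variable can be
  instantiated by a constant (`Tight.not_gen_single`).
* For a term `q` and a substitution `σ`, a list `l` of variables is *sufficient* (`Suf`) if `qσ`
  modulo absorption depends only on the values of the variables in `l`. There is always a
  sufficient list whose values have total size at most that of the normal form of `qσ`; the
  inequality is strict unless `q` is a variable or `q = f(…)` with `qσ ≈ ε_f` (`exists_suf`).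
  Sufficient lists compose, so passing from `r` to `rτ` never increases the weight
  (`exists_suf_subst`).

Among the tight generalizations above a given one, choose `r` with the smallest uniform bound on
the weight of sufficient lists, over all pairs of substitutions witnessing that `r` is a
generalization. If a tight `r''` lies above `r`, say `r'' ≈ rτ`, then for some pair of witnesses
the weight does not drop. Hence a variable of `r` is either sent by `τ` to a variable, or is, for
each of the two witnesses, outside the sufficient list or has value `ε_f`, with the same `f` on
both sides. In the second case it could be instantiated by a constant, against tightness. So `τ`
sends variables to variables, injectively by tightness, and `r''` is a renaming of `r`.

**Infinity.** The terms `fam n = g(f(h(tower_n(z, y)), y), f(z, h(ε_f)))`, where `tower_n(z, y)` is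
`f(… f(f(z, y), y) …, y)`, generalize `s'` (by `y ↦ ε_f`, `z ↦ a`) and `t'` (by `y ↦ a`,
`z ↦ ε_f`). In any instance that is still a generalization, the images of `y` and `z` generalize
both `a` and `ε_f`, so they are variables and the height of the tower survives in the normal form.
Therefore distinct `fam n` lie below distinct elements of a minimal complete set.
-/

/- Common development: first-order terms, absorption theories, anti-unification
   equations, configurations and the AUnif transformation rules. -/

namespace AbsAU

/-- First-order terms over a set `F` of function symbols, with variables drawn
from the countably infinite set `ℕ`. -/
inductive Tm (F : Type) : Type where
  | var : ℕ → Tm F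
  | app : F → List (Tm F) → Tm F

namespace Tm

variable {F : Type}

/-- Application of a substitution (given as a total map on variables) to a term. -/
def subst (σ : ℕ → Tm F) : Tm F → Tm F
  | var x => σ x
  | app f ts => app f (ts.attach.map fun t => subst σ t.1)
decreasing_by
  have := List.sizeOf_lt_of_mem t.2
  simp only [Tm.app.sizeOf_spec]
  omega

/-- The head of a term: a variable or a function symbol. -/
def head : Tm F → ℕ ⊕ F
  | var x => Sum.inl x
  | app f _ => Sum.inr f

end Tm

/-- `VarIn x t` holds iff the variable `x` occurs in the term `t`. -/
inductive VarIn {F : Type} : ℕ → Tm F → Prop where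
  | var (x : ℕ) : VarIn x (.var x)
  | app {x : ℕ} {t : Tm F} (f : F) {ts : List (Tm F)} :
      t ∈ ts → VarIn x t → VarIn x (.app f ts)

/-- `SymOcc f t` holds iff the function symbol `f` occurs in the term `t`. -/
inductive SymOcc {F : Type} (f : F) : Tm F → Prop where
  | head (ts : List (Tm F)) : SymOcc f (.app f ts)
  | arg {t : Tm F} (g : F) {ts : List (Tm F)} :
      t ∈ ts → SymOcc f t → SymOcc f (.app g ts)

/-- Signature data: an arity for every symbol and the distinguished wild card
constant `⋆`. -/
structure AbsSig (F : Type) where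
  arity : F → ℕ
  star : F
  star_arity : arity star = 0

/-- Arity-respecting (well-formed) terms. -/
inductive WFT {F : Type} (Sg : AbsSig F) : Tm F → Prop where
  | var (x : ℕ) : WFT Sg (.var x)
  | app {f : F} {ts : List (Tm F)} :
      ts.length = Sg.arity f → (∀ t ∈ ts, WFT Sg t) → WFT Sg (.app f ts)

/-- An absorption theory: finitely many pairs `(f, ε_f)` of a binary symbol
together with its absorption constant, all chosen symbols pairwise distinct and
distinct from the wild card. -/
structure AbsTh {F : Type} (Sg : AbsSig F) where
  pairs : Set (F × F)
  finite : pairs.Finite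
  binary : ∀ p ∈ pairs, Sg.arity p.1 = 2
  constZ : ∀ p ∈ pairs, Sg.arity p.2 = 0
  distinct : ∀ p ∈ pairs, ∀ q ∈ pairs, p ≠ q →
      p.1 ≠ q.1 ∧ p.1 ≠ q.2 ∧ p.2 ≠ q.1 ∧ p.2 ≠ q.2
  ne : ∀ p ∈ pairs, p.1 ≠ p.2
  star_ne : ∀ p ∈ pairs, Sg.star ≠ p.1 ∧ Sg.star ≠ p.2

variable {F : Type}

/-- `≈_Abs` : the least congruence on terms containing all substitution
instances of the absorption axioms `f(ε_f, x) ≈ ε_f` and `f(x, ε_f) ≈ ε_f`. -/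
inductive AbsEq {Sg : AbsSig F} (Th : AbsTh Sg) : Tm F → Tm F → Prop where
  | absL {f e : F} (t : Tm F) : (f, e) ∈ Th.pairs →
      AbsEq Th (.app f [.app e [], t]) (.app e [])
  | absR {f e : F} (t : Tm F) : (f, e) ∈ Th.pairs →
      AbsEq Th (.app f [t, .app e []]) (.app e [])
  | refl (t : Tm F) : AbsEq Th t t
  | symm {s t : Tm F} : AbsEq Th s t → AbsEq Th t s
  | trans {s t u : Tm F} : AbsEq Th s t → AbsEq Th t u → AbsEq Th s u
  | congr (f : F) {ss ts : List (Tm F)} :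
      List.Forall₂ (AbsEq Th) ss ts → AbsEq Th (.app f ss) (.app f ts)

/-- The domain of a substitution. -/
def Dom (σ : ℕ → Tm F) : Set ℕ := {x | σ x ≠ .var x}

/-- A substitution proper has a finite domain. -/
def FinDom (σ : ℕ → Tm F) : Prop := (Dom σ).Finite

/-- The variables occurring in the range of a substitution. -/
def Rvar (σ : ℕ → Tm F) : Set ℕ := {y | ∃ x ∈ Dom σ, VarIn y (σ x)}

/-- `r ≲_Abs s` : `r` is more general than `s` modulo the absorption theory. -/
def MoreGen {Sg : AbsSig F} (Th : AbsTh Sg) (r s : Tm F) : Prop :=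
  ∃ σ : ℕ → Tm F, FinDom σ ∧ AbsEq Th (r.subst σ) s

/-- `r` is an `Abs`-generalization of `s` and `t`. -/
def Gen {Sg : AbsSig F} (Th : AbsTh Sg) (r s t : Tm F) : Prop :=
  MoreGen Th r s ∧ MoreGen Th r t

/-- The set of all `Abs`-generalizations of `s` and `t`. -/
def GAbs {Sg : AbsSig F} (Th : AbsTh Sg) (s t : Tm F) : Set (Tm F) :=
  {r | Gen Th r s t}

/-- `M` is a minimal complete set of `Abs`-generalizations of `s` and `t`. -/
def IsMCSG {Sg : AbsSig F} (Th : AbsTh Sg) (M : Set (Tm F)) (s t : Tm F) : Prop :=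
  M ⊆ GAbs Th s t ∧
  (∀ r ∈ GAbs Th s t, ∃ r' ∈ M, MoreGen Th r r') ∧
  (∀ r ∈ M, ∀ r' ∈ M, MoreGen Th r r' → r = r')

/-- `Abs`-normal forms: no absorption constant occurs as an argument of its
absorption symbol. -/
inductive NF {Sg : AbsSig F} (Th : AbsTh Sg) : Tm F → Prop where
  | var (x : ℕ) : NF Th (.var x)
  | app {f : F} {ts : List (Tm F)} :
      (∀ t ∈ ts, NF Th t) →
      (∀ e : F, (f, e) ∈ Th.pairs → Tm.app e [] ∉ ts) →
      NF Th (.app f ts)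

/-- An anti-unification equation (AUE) `lhs ≜_lab rhs`. -/
structure AUE (F : Type) where
  lhs : Tm F
  lab : ℕ
  rhs : Tm F

/-- The labels of a set of AUEs. -/
def labels (W : Set (AUE F)) : Set ℕ := AUE.lab '' W

/-- A set of AUEs is valid if its labels are pairwise distinct. -/
def ValidAUEs (W : Set (AUE F)) : Prop :=
  ∀ a ∈ W, ∀ b ∈ W, a.lab = b.lab → a = b

/-- The wild card, as a term. -/
def starTm (Sg : AbsSig F) : Tm F := .app Sg.star []

/-- A wild AUE has the wild card on one of its sides. -/
def WildAUE (Sg : AbsSig F) (a : AUE F) : Prop :=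
  a.lhs = starTm Sg ∨ a.rhs = starTm Sg

/-- The heads of `s` and `t` form a related absorption pair. -/
def RelatedAbs {Sg : AbsSig F} (Th : AbsTh Sg) (s t : Tm F) : Prop :=
  ∃ f e : F, (f, e) ∈ Th.pairs ∧
    ((s.head = Sum.inr f ∧ t.head = Sum.inr e) ∨
     (s.head = Sum.inr e ∧ t.head = Sum.inr f))

/-- A solved AUE: distinct heads, no related absorption symbols, not wild. -/
def SolvedAUE {Sg : AbsSig F} (Th : AbsTh Sg) (a : AUE F) : Prop :=
  a.lhs.head ≠ a.rhs.head ∧ ¬ RelatedAbs Th a.lhs a.rhs ∧ ¬ WildAUE Sg a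

/-- A proper object term appearing in an AUE of a configuration: in
`Abs`-normal form, arity-respecting, ground, and wild-card free. -/
def GoodTm {Sg : AbsSig F} (Th : AbsTh Sg) (t : Tm F) : Prop :=
  NF Th t ∧ WFT Sg t ∧ (∀ x : ℕ, ¬ VarIn x t) ∧ ¬ SymOcc Sg.star t

/-- A configuration `⟨A; S; T; θ⟩`. -/
structure Config (F : Type) where
  A : Set (AUE F)
  S : Set (AUE F)
  T : Set (AUE F)
  θ : ℕ → Tm F

/-- The defining properties of configurations: `A`, `S`, `T` are (finite) valid
sets of unsolved, solved, resp. wild AUEs over object terms in `Abs`-normal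
form, `θ` is a substitution, (i) the labels of `A`, `S`, `T` and the domain of
`θ` are pairwise disjoint, and (ii) the variables occurring in the range of `θ`
are exactly the labels of `A`, `S` and `T`. -/
structure IsConfig {Sg : AbsSig F} (Th : AbsTh Sg) (C : Config F) : Prop where
  finA : C.A.Finite
  finS : C.S.Finite
  finT : C.T.Finite
  validA : ValidAUEs C.A
  validS : ValidAUEs C.S
  validT : ValidAUEs C.T
  goodA : ∀ a ∈ C.A, GoodTm Th a.lhs ∧ GoodTm Th a.rhs
  goodS : ∀ a ∈ C.S, GoodTm Th a.lhs ∧ GoodTm Th a.rhs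
  solvedS : ∀ a ∈ C.S, SolvedAUE Th a
  wildT : ∀ a ∈ C.T,
      (a.lhs = starTm Sg ∧ GoodTm Th a.rhs) ∨
      (a.rhs = starTm Sg ∧ GoodTm Th a.lhs)
  finDom : FinDom C.θ
  nfθ : ∀ x : ℕ, NF Th (C.θ x) ∧ WFT Sg (C.θ x)
  disjAS : Disjoint (labels C.A) (labels C.S)
  disjAT : Disjoint (labels C.A) (labels C.T)
  disjST : Disjoint (labels C.S) (labels C.T)
  disjAD : Disjoint (labels C.A) (Dom C.θ)
  disjSD : Disjoint (labels C.S) (Dom C.θ)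
  disjTD : Disjoint (labels C.T) (Dom C.θ)
  rvarEq : Rvar C.θ = labels C.A ∪ labels C.S ∪ labels C.T

/-- The substitution `{x ↦ t}`. -/
def single (x : ℕ) (t : Tm F) : ℕ → Tm F :=
  fun z => if z = x then t else .var z

/-- Composition `θ{x ↦ t}` of a substitution with a single binding. -/
def compOne (θ : ℕ → Tm F) (x : ℕ) (t : Tm F) : ℕ → Tm F :=
  fun z => (θ z).subst (single x t)

/-- A variable is fresh for a configuration. -/
def FreshIn (C : Config F) (y : ℕ) : Prop :=
  y ∉ labels C.A ∧ y ∉ labels C.S ∧ y ∉ labels C.T ∧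
  y ∉ Dom C.θ ∧ y ∉ Rvar C.θ

/-- Canonical choice of the next fresh variable for a configuration. -/
noncomputable def nextFresh (C : Config F) : ℕ :=
  sInf {k : ℕ | ∀ m : ℕ, k ≤ m → FreshIn C m}

/-- The set of AUEs `{s₁ ≜_{y₁} t₁, …, sₙ ≜_{yₙ} tₙ}`. -/
def zipAUEs (ss : List (Tm F)) (ys : List ℕ) (ts : List (Tm F)) : Set (AUE F) :=
  {a | ∃ (i : ℕ) (h1 : i < ss.length) (h2 : i < ys.length) (h3 : i < ts.length),
      a = ⟨ss.get ⟨i, h1⟩, ys.get ⟨i, h2⟩, ts.get ⟨i, h3⟩⟩}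

/-- The AUnif transformation rules: Decompose, Solve, the four Expansion rules
for left/right absorption, and Merge. -/
inductive Step {Sg : AbsSig F} (Th : AbsTh Sg) : Config F → Config F → Prop where
  | dec (f : F) (ss ts : List (Tm F)) (x : ℕ) (ys : List ℕ)
      (A S T : Set (AUE F)) (θ : ℕ → Tm F)
      (hlen : ss.length = ts.length)
      (hnotin : (⟨.app f ss, x, .app f ts⟩ : AUE F) ∉ A)
      (hys : ys = (List.range ss.length).map
          (fun i => nextFresh (⟨insert ⟨.app f ss, x, .app f ts⟩ A, S, T, θ⟩ : Config F) + i)) :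
      Step Th ⟨insert ⟨.app f ss, x, .app f ts⟩ A, S, T, θ⟩
        ⟨zipAUEs ss ys ts ∪ A, S, T, compOne θ x (.app f (ys.map Tm.var))⟩
  | sol (a : AUE F) (A S T : Set (AUE F)) (θ : ℕ → Tm F)
      (hhead : a.lhs.head ≠ a.rhs.head)
      (hrel : ¬ RelatedAbs Th a.lhs a.rhs)
      (hnotin : a ∉ A) :
      Step Th ⟨insert a A, S, T, θ⟩ ⟨A, insert a S, T, θ⟩
  | expLA1 (f e : F) (t1 t2 : Tm F) (x y1 y2 : ℕ)
      (A S T : Set (AUE F)) (θ : ℕ → Tm F)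
      (hp : (f, e) ∈ Th.pairs)
      (hnotin : (⟨.app e [], x, .app f [t1, t2]⟩ : AUE F) ∉ A)
      (hy1 : y1 = nextFresh (⟨insert ⟨.app e [], x, .app f [t1, t2]⟩ A, S, T, θ⟩ : Config F))
      (hy2 : y2 = y1 + 1) :
      Step Th ⟨insert ⟨.app e [], x, .app f [t1, t2]⟩ A, S, T, θ⟩
        ⟨insert ⟨.app e [], y1, t1⟩ A, S, insert ⟨starTm Sg, y2, t2⟩ T,
          compOne θ x (.app f [.var y1, .var y2])⟩
  | expLA2 (f e : F) (t1 t2 : Tm F) (x y1 y2 : ℕ)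
      (A S T : Set (AUE F)) (θ : ℕ → Tm F)
      (hp : (f, e) ∈ Th.pairs)
      (hnotin : (⟨.app e [], x, .app f [t1, t2]⟩ : AUE F) ∉ A)
      (hy1 : y1 = nextFresh (⟨insert ⟨.app e [], x, .app f [t1, t2]⟩ A, S, T, θ⟩ : Config F))
      (hy2 : y2 = y1 + 1) :
      Step Th ⟨insert ⟨.app e [], x, .app f [t1, t2]⟩ A, S, T, θ⟩
        ⟨insert ⟨.app e [], y2, t2⟩ A, S, insert ⟨starTm Sg, y1, t1⟩ T,
          compOne θ x (.app f [.var y1, .var y2])⟩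
  | expRA1 (f e : F) (s1 s2 : Tm F) (x y1 y2 : ℕ)
      (A S T : Set (AUE F)) (θ : ℕ → Tm F)
      (hp : (f, e) ∈ Th.pairs)
      (hnotin : (⟨.app f [s1, s2], x, .app e []⟩ : AUE F) ∉ A)
      (hy1 : y1 = nextFresh (⟨insert ⟨.app f [s1, s2], x, .app e []⟩ A, S, T, θ⟩ : Config F))
      (hy2 : y2 = y1 + 1) :
      Step Th ⟨insert ⟨.app f [s1, s2], x, .app e []⟩ A, S, T, θ⟩
        ⟨insert ⟨s1, y1, .app e []⟩ A, S, insert ⟨s2, y2, starTm Sg⟩ T,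
          compOne θ x (.app f [.var y1, .var y2])⟩
  | expRA2 (f e : F) (s1 s2 : Tm F) (x y1 y2 : ℕ)
      (A S T : Set (AUE F)) (θ : ℕ → Tm F)
      (hp : (f, e) ∈ Th.pairs)
      (hnotin : (⟨.app f [s1, s2], x, .app e []⟩ : AUE F) ∉ A)
      (hy1 : y1 = nextFresh (⟨insert ⟨.app f [s1, s2], x, .app e []⟩ A, S, T, θ⟩ : Config F))
      (hy2 : y2 = y1 + 1) :
      Step Th ⟨insert ⟨.app f [s1, s2], x, .app e []⟩ A, S, T, θ⟩
        ⟨insert ⟨s2, y2, .app e []⟩ A, S, insert ⟨s1, y1, starTm Sg⟩ T,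
          compOne θ x (.app f [.var y1, .var y2])⟩
  | mer (s t : Tm F) (x y : ℕ) (S T : Set (AUE F)) (θ : ℕ → Tm F)
      (hxy : x ≠ y)
      (hx : (⟨s, x, t⟩ : AUE F) ∉ S) (hy : (⟨s, y, t⟩ : AUE F) ∉ S) :
      Step Th ⟨∅, insert ⟨s, x, t⟩ (insert ⟨s, y, t⟩ S), T, θ⟩
        ⟨∅, insert ⟨s, y, t⟩ S, T, compOne θ x (.var y)⟩

/-- A final (normal) configuration: no rule applies. -/
def Final {Sg : AbsSig F} (Th : AbsTh Sg) (C : Config F) : Prop :=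
  ∀ C' : Config F, ¬ Step Th C C'

/-- `AUnif(C)`: the set of final configurations reachable from `C`. -/
def AUnifSet {Sg : AbsSig F} (Th : AbsTh Sg) (C : Config F) : Set (Config F) :=
  {C' | Relation.ReflTransGen (Step Th) C C' ∧ Final Th C'}

open Classical in
/-- The left substitution `σ_W` associated with a set of AUEs. -/
noncomputable def sigmaW (W : Set (AUE F)) : ℕ → Tm F :=
  fun y => if h : ∃ a, a ∈ W ∧ a.lab = y then h.choose.lhs else .var y

open Classical in
/-- The right substitution `ρ_W` associated with a set of AUEs. -/
noncomputable def rhoW (W : Set (AUE F)) : ℕ → Tm F :=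
  fun y => if h : ∃ a, a ∈ W ∧ a.lab = y then h.choose.rhs else .var y

/-- The abstraction set `↑(t, σ)`. -/
def absSet {Sg : AbsSig F} (Th : AbsTh Sg) (t : Tm F) (σ : ℕ → Tm F) : Set (Tm F) :=
  {r | AbsEq Th (r.subst σ) t ∧ NF Th r ∧ ∀ x : ℕ, VarIn x r → x ∈ Dom σ}

/-- `Ψ(T, S)`: the set of abstraction substitutions of a configuration with
abstraction `T` and store `S`. -/
def Psi {Sg : AbsSig F} (Th : AbsTh Sg) (T S : Set (AUE F)) : Set (ℕ → Tm F) :=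
  {τ | Dom τ = labels T ∧ ∀ a ∈ T,
      (a.lhs = starTm Sg → τ a.lab ∈ absSet Th a.rhs (rhoW S)) ∧
      (a.rhs = starTm Sg → τ a.lab ∈ absSet Th a.lhs (sigmaW S))}

/-- The initial configuration `⟨{s ≜_x t}; ∅; ∅; ι⟩` with starting label `xst`
and starting substitution `ι = {xst ↦ x}`. -/
def initConfig (s t : Tm F) (x xst : ℕ) : Config F :=
  ⟨{⟨s, x, t⟩}, ∅, ∅, single xst (.var x)⟩

/-- `AUnif(C₀)` is merged: identical solved AUEs in (possibly different) final
stores carry the same label, and equal labels carry identical AUEs. -/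
def Merged {Sg : AbsSig F} (Th : AbsTh Sg) (C0 : Config F) : Prop :=
  ∀ C1 ∈ AUnifSet Th C0, ∀ C2 ∈ AUnifSet Th C0, ∀ a ∈ C1.S, ∀ b ∈ C2.S,
    ((a.lhs = b.lhs ∧ a.rhs = b.rhs) ↔ a.lab = b.lab)

/-- `C_AUnif(s, t)`: all generalizations computed from final configurations of
the initial configuration for `s ≜_x t`, instantiated by abstraction
substitutions. -/
def CAUnif {Sg : AbsSig F} (Th : AbsTh Sg) (s t : Tm F) (x xst : ℕ) : Set (Tm F) :=
  {g | ∃ C' ∈ AUnifSet Th (initConfig s t x xst),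
      ∃ τ ∈ Psi Th C'.T C'.S, g = (C'.θ x).subst τ}

/-- Linear terms: no variable occurs more than once. -/
inductive Linear {F : Type} : Tm F → Prop where
  | var (x : ℕ) : Linear (.var x)
  | app (f : F) {ts : List (Tm F)} :
      (∀ t ∈ ts, Linear t) →
      List.Pairwise (fun s t => ∀ x : ℕ, VarIn x s → ¬ VarIn x t) ts →
      Linear (.app f ts)



/-! ### Induction on terms, substitutions, variables -/

theorem Tm.induct {F : Type} {P : Tm F → Prop} (hv : ∀ x, P (.var x))
    (ha : ∀ f ts, (∀ t ∈ ts, P t) → P (.app f ts)) : ∀ t, P t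
  | .var x => hv x
  | .app f ts => ha f ts fun t _ => Tm.induct hv ha t
decreasing_by
  have := List.sizeOf_lt_of_mem ‹_›
  simp only [Tm.app.sizeOf_spec]
  omega

@[simp] theorem Tm.subst_var {F : Type} (σ : ℕ → Tm F) (x : ℕ) :
    (Tm.var x).subst σ = σ x := by
  rw [Tm.subst]

@[simp] theorem Tm.subst_app {F : Type} (σ : ℕ → Tm F) (f : F) (ts : List (Tm F)) :
    (Tm.app f ts).subst σ = .app f (ts.map (Tm.subst σ)) := by
  rw [Tm.subst]
  congr 1
  simp

theorem Tm.subst_subst {F : Type} (σ τ : ℕ → Tm F) (t : Tm F) :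
    (t.subst σ).subst τ = t.subst (fun x => (σ x).subst τ) := by
  induction t using Tm.induct with
  | hv x => simp
  | ha f ts ih => simpa using ih

theorem varIn_var {F : Type} {x y : ℕ} : VarIn x (.var y : Tm F) ↔ x = y := by
  constructor
  · intro h
    cases h
    rfl
  · rintro rfl
    exact .var x

theorem varIn_app {F : Type} {x : ℕ} {f : F} {ts : List (Tm F)} :
    VarIn x (.app f ts) ↔ ∃ t ∈ ts, VarIn x t := by
  constructor
  · intro h
    cases h with
    | app _ h1 h2 => exact ⟨_, h1, h2⟩
  · rintro ⟨t, h1, h2⟩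
    exact .app f h1 h2

theorem varIn_subst {F : Type} {σ : ℕ → Tm F} {y : ℕ} {t : Tm F} :
    VarIn y (t.subst σ) ↔ ∃ x, VarIn x t ∧ VarIn y (σ x) := by
  induction t using Tm.induct with
  | hv x => simp [varIn_var]
  | ha f ts ih =>
    simp only [Tm.subst_app, varIn_app, List.mem_map]
    constructor
    · rintro ⟨_, ⟨t, ht, rfl⟩, h⟩
      obtain ⟨x, h1, h2⟩ := (ih t ht).1 h
      exact ⟨x, ⟨t, ht, h1⟩, h2⟩
    · rintro ⟨x, ⟨t, ht, h1⟩, h2⟩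
      exact ⟨_, ⟨t, ht, rfl⟩, (ih t ht).2 ⟨x, h1, h2⟩⟩

/-- The set of variables of a term. -/
def vars {F : Type} (t : Tm F) : Set ℕ := {x | VarIn x t}

theorem vars_finite {F : Type} (t : Tm F) : (vars t).Finite := by
  induction t using Tm.induct with
  | hv x => simp [vars, varIn_var]
  | ha f ts ih =>
    have : vars (.app f ts) = ⋃ t ∈ {t | t ∈ ts}, vars t := by
      ext x
      simp [vars, varIn_app]
    rw [this]
    exact (List.finite_toSet ts).biUnion ih

theorem subst_congr {F : Type} {σ τ : ℕ → Tm F} {t : Tm F}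
    (h : ∀ x, VarIn x t → σ x = τ x) : t.subst σ = t.subst τ := by
  induction t using Tm.induct with
  | hv x => simpa using h x (.var x)
  | ha f ts ih =>
    simp only [Tm.subst_app, Tm.app.injEq, true_and]
    exact List.map_congr_left fun t ht => ih t ht fun x hx => h x (.app f ht hx)

theorem subst_id {F : Type} (t : Tm F) : t.subst .var = t := by
  induction t using Tm.induct with
  | hv x => simp
  | ha f ts ih =>
    simp only [Tm.subst_app, Tm.app.injEq, true_and]
    conv_rhs => rw [← List.map_id ts]
    exact List.map_congr_left ih

theorem finDom_comp {F : Type} {σ τ : ℕ → Tm F} (hσ : FinDom σ) (hτ : FinDom τ) :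
    FinDom (fun x => (σ x).subst τ) := by
  refine (hσ.union hτ).subset fun x hx => ?_
  by_contra h
  simp only [Dom, Set.mem_union, Set.mem_ofPred_eq, not_or, not_not] at h hx
  rw [h.1, Tm.subst_var] at hx
  exact hx h.2

theorem finDom_single {F : Type} (x : ℕ) (t : Tm F) : FinDom (single x t) := by
  refine (Set.finite_singleton x).subset fun z hz => ?_
  by_contra h
  simp only [Set.mem_singleton_iff] at h
  simp [Dom, single, h] at hz

/-! ### Normal forms decide equality modulo absorption -/

section
variable {Sg : AbsSig F} (Th : AbsTh Sg)

theorem pair_unique {f e e' : F} (h : (f, e) ∈ Th.pairs) (h' : (f, e') ∈ Th.pairs) :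
    e = e' := by
  by_contra hne
  exact (Th.distinct _ h _ h' (by simpa using hne)).1 rfl

open Classical in
/-- The normal form of `f(us)` when all `us` are in normal form. -/
noncomputable def nrm (f : F) (us : List (Tm F)) : Tm F :=
  if h : ∃ e, (f, e) ∈ Th.pairs ∧ us.length = 2 ∧ Tm.app e [] ∈ us then .app h.choose []
  else .app f us

/-- The normal form of a term with respect to the rewrite rules `f(ε_f, x) → ε_f` and
`f(x, ε_f) → ε_f`, computed bottom-up. -/
noncomputable def nf : Tm F → Tm F
  | .var x => .var x
  | .app f ts => nrm Th f (ts.attach.map fun t => nf t.1)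
decreasing_by
  have := List.sizeOf_lt_of_mem t.2
  simp only [Tm.app.sizeOf_spec]
  omega

variable {Th}

theorem nrm_abs {f e : F} {us : List (Tm F)} (h : (f, e) ∈ Th.pairs) (hl : us.length = 2)
    (hm : Tm.app e [] ∈ us) : nrm Th f us = .app e [] := by
  have hex : ∃ e, (f, e) ∈ Th.pairs ∧ us.length = 2 ∧ Tm.app e [] ∈ us := ⟨e, h, hl, hm⟩
  rw [nrm, dif_pos hex, pair_unique Th h hex.choose_spec.1]

theorem nrm_not_abs {f : F} {us : List (Tm F)}
    (h : ¬ ∃ e, (f, e) ∈ Th.pairs ∧ us.length = 2 ∧ Tm.app e [] ∈ us) :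
    nrm Th f us = .app f us := by
  rw [nrm, dif_neg h]

@[simp] theorem nf_var (x : ℕ) : nf Th (.var x) = .var x := by
  rw [nf]

@[simp] theorem nf_app (f : F) (ts : List (Tm F)) :
    nf Th (.app f ts) = nrm Th f (ts.map (nf Th)) := by
  rw [nf]
  congr 1
  simp

@[simp] theorem nrm_nil (f : F) : nrm Th f [] = .app f [] := nrm_not_abs (by simp)

theorem absEq_nf (t : Tm F) : AbsEq Th t (nf Th t) := by
  induction t using Tm.induct with
  | hv x => simpa using AbsEq.refl _
  | ha f ts ih =>
    rw [nf_app]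
    have h1 : AbsEq Th (.app f ts) (.app f (ts.map (nf Th))) := by
      refine .congr f ?_
      rw [List.forall₂_map_right_iff, List.forall₂_same]
      exact ih
    refine h1.trans ?_
    generalize ts.map (nf Th) = us
    by_cases h : ∃ e, (f, e) ∈ Th.pairs ∧ us.length = 2 ∧ Tm.app e [] ∈ us
    · obtain ⟨e, hp, hl, hm⟩ := h
      rw [nrm_abs hp hl hm]
      obtain ⟨u, v, rfl⟩ := List.length_eq_two.1 hl
      rcases List.mem_pair.1 hm with rfl | rfl
      · exact .absL _ hp
      · exact .absR _ hp
    · rw [nrm_not_abs h]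
      exact .refl _

theorem AbsEq.nf_eq {s t : Tm F} (h : AbsEq Th s t) : nf Th s = nf Th t := by
  refine AbsEq.rec (motive_1 := fun s t _ => nf Th s = nf Th t)
    (motive_2 := fun ss ts _ => ss.map (nf Th) = ts.map (nf Th))
    ?_ ?_ ?_ ?_ ?_ ?_ ?_ ?_ h
  · intro f e t hp
    simp [nrm_abs hp]
  · intro f e t hp
    simp [nrm_abs hp]
  · intro t
    rfl
  · intro s t _ ih
    exact ih.symm
  · intro s t u _ _ ih1 ih2
    exact ih1.trans ih2
  · intro f ss ts _ ih
    simp [ih]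
  · rfl
  · intro a b l l' _ _ ih1 ih2
    simp [ih1, ih2]

theorem absEq_iff {s t : Tm F} : AbsEq Th s t ↔ nf Th s = nf Th t :=
  ⟨AbsEq.nf_eq, fun h => (absEq_nf s).trans (h ▸ (absEq_nf t).symm)⟩

theorem nf_subst_nf (σ : ℕ → Tm F) (q : Tm F) :
    nf Th ((nf Th q).subst σ) = nf Th (q.subst σ) := by
  induction q using Tm.induct with
  | hv x => simp
  | ha f ts ih =>
    rw [nf_app, Tm.subst_app, nf_app]
    by_cases h : ∃ e, (f, e) ∈ Th.pairs ∧ (ts.map (nf Th)).length = 2 ∧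
        Tm.app e [] ∈ ts.map (nf Th)
    · obtain ⟨e, hp, hl, hm⟩ := h
      rw [nrm_abs hp hl hm]
      obtain ⟨t, ht, hte⟩ := List.mem_map.1 hm
      rw [nrm_abs hp (by simpa using hl)]
      · simp
      · have := ih t ht
        rw [hte] at this
        simp only [Tm.subst_app, List.map_nil, nf_app, nrm_nil] at this
        rw [this, List.map_map]
        exact List.mem_map.2 ⟨t, ht, rfl⟩
    · rw [nrm_not_abs h, Tm.subst_app, nf_app, List.map_map, List.map_map, List.map_map]
      congr 1
      exact List.map_congr_left fun t ht => by simpa using ih t ht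

theorem nf_subst_congr_left {σ : ℕ → Tm F} {q q' : Tm F} (h : nf Th q = nf Th q') :
    nf Th (q.subst σ) = nf Th (q'.subst σ) := by
  rw [← nf_subst_nf, h, nf_subst_nf]

theorem nf_subst_congr_right {σ τ : ℕ → Tm F} {q : Tm F}
    (h : ∀ x, VarIn x q → nf Th (σ x) = nf Th (τ x)) :
    nf Th (q.subst σ) = nf Th (q.subst τ) := by
  induction q using Tm.induct with
  | hv x => simpa using h x (.var x)
  | ha f ts ih =>
    rw [Tm.subst_app, Tm.subst_app, nf_app, nf_app, List.map_map, List.map_map]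
    congr 1
    exact List.map_congr_left fun t ht => ih t ht fun x hx => h x (.app f ht hx)

/-! ### The instantiation preorder -/

theorem moreGen_iff {r s : Tm F} :
    MoreGen Th r s ↔ ∃ σ, FinDom σ ∧ nf Th (r.subst σ) = nf Th s := by
  simp only [MoreGen, absEq_iff]

theorem finDom_var : FinDom (Tm.var : ℕ → Tm F) := by
  simp [FinDom, Dom]

theorem MoreGen.refl (r : Tm F) : MoreGen Th r r :=
  ⟨.var, finDom_var, by rw [subst_id]; exact .refl r⟩

theorem MoreGen.trans {r s t : Tm F} (h1 : MoreGen Th r s) (h2 : MoreGen Th s t) :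
    MoreGen Th r t := by
  rw [moreGen_iff] at *
  obtain ⟨σ, hσ, h1⟩ := h1
  obtain ⟨τ, hτ, h2⟩ := h2
  refine ⟨_, finDom_comp hσ hτ, ?_⟩
  rw [← Tm.subst_subst, nf_subst_congr_left h1, h2]

theorem MoreGen.gen {r r' s t : Tm F} (h : MoreGen Th r r') (hg : Gen Th r' s t) :
    Gen Th r s t :=
  ⟨h.trans hg.1, h.trans hg.2⟩

theorem moreGen_subst (r : Tm F) {τ : ℕ → Tm F} (hτ : FinDom τ) :
    MoreGen Th r (r.subst τ) :=
  ⟨τ, hτ, .refl _⟩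

/-! ### Variables that determine the value of an instance -/

/-- The value of `q` under `σ`, modulo absorption, depends only on the values of the variables
in the list `l`. -/
def Suf (Th : AbsTh Sg) (q : Tm F) (σ : ℕ → Tm F) (l : List ℕ) : Prop :=
  ∀ σ' : ℕ → Tm F, (∀ x ∈ l, nf Th (σ' x) = nf Th (σ x)) →
    nf Th (q.subst σ') = nf Th (q.subst σ)

/-- The total size of the normalized values under `σ` of the variables in `l`. -/
noncomputable def wt (Th : AbsTh Sg) (σ : ℕ → Tm F) (l : List ℕ) : ℕ :=
  (l.map fun x => sizeOf (nf Th (σ x))).sum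

theorem wt_flatMap {α : Type*} (σ : ℕ → Tm F) (L : List α) (φ : α → List ℕ) :
    wt Th σ (L.flatMap φ) = (L.map fun a => wt Th σ (φ a)).sum := by
  induction L with
  | nil => simp [wt]
  | cons a L ih =>
    rw [wt] at ih
    simp [wt, ih]

theorem sum_sizeOf_lt (ts : List (Tm F)) : (ts.map sizeOf).sum < sizeOf ts := by
  induction ts with
  | nil => simp
  | cons a l ih =>
    simp only [List.map_cons, List.sum_cons, List.cons.sizeOf_spec]
    omega

/-- The value of `q` under `σ` is determined by variable occurrences whose values are disjoint
subterms of it. When the root of `q` is absorbed, one argument with value `ε_f` suffices, so the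
bound is strict unless `q` is a variable or is absorbed at its root. -/
theorem exists_suf (σ : ℕ → Tm F) (q : Tm F) :
    ∃ l, Suf Th q σ l ∧ wt Th σ l ≤ sizeOf (nf Th (q.subst σ)) ∧
      (wt Th σ l < sizeOf (nf Th (q.subst σ)) ∨ (∃ y, q = .var y) ∨
        ∃ f e qs, (f, e) ∈ Th.pairs ∧ q = .app f qs ∧ nf Th (q.subst σ) = .app e []) := by
  induction q using Tm.induct with
  | hv x =>
    refine ⟨[x], fun σ' h => by simpa using h, ?_, .inr (.inl ⟨x, rfl⟩)⟩
    simp [wt]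
  | ha f ts ih =>
    choose! φ h1 h2 _ using ih
    by_cases h : ∃ e, (f, e) ∈ Th.pairs ∧ ts.length = 2 ∧
        ∃ t ∈ ts, nf Th (t.subst σ) = .app e []
    · obtain ⟨e, hp, hl, t, ht, hte⟩ := h
      have key : ∀ σ' : ℕ → Tm F, nf Th (t.subst σ') = .app e [] →
          nf Th ((Tm.app f ts).subst σ') = .app e [] := by
        intro σ' h'
        rw [Tm.subst_app, nf_app, nrm_abs hp (by simpa using hl)]
        rw [← h', List.map_map]
        exact List.mem_map.2 ⟨t, ht, rfl⟩
      refine ⟨φ t, fun σ' h' => ?_, ?_, .inr (.inr ⟨f, e, ts, hp, rfl, key σ hte⟩)⟩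
      · rw [key σ hte, key σ' ((h1 t ht σ' h').trans hte)]
      · rw [key σ hte, ← hte]
        exact h2 t ht
    · have hna : nf Th ((Tm.app f ts).subst σ)
          = .app f (ts.map fun t => nf Th (t.subst σ)) := by
        rw [Tm.subst_app, nf_app, List.map_map, nrm_not_abs]
        · rfl
        · rintro ⟨e, hp, hl, hm⟩
          obtain ⟨t, ht, hte⟩ := List.mem_map.1 hm
          exact h ⟨e, hp, by simpa using hl, t, ht, hte⟩
      have hlt : wt Th σ (ts.flatMap φ) < sizeOf (nf Th ((Tm.app f ts).subst σ)) := by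
        rw [hna, wt_flatMap, Tm.app.sizeOf_spec]
        have h3 : (ts.map fun t => wt Th σ (φ t)).sum
            ≤ (ts.map fun t => sizeOf (nf Th (t.subst σ))).sum :=
          List.sum_le_sum h2
        have h4 := sum_sizeOf_lt (ts.map fun t => nf Th (t.subst σ))
        rw [List.map_map] at h4
        simp only [Function.comp_def] at h4
        omega
      refine ⟨ts.flatMap φ, fun σ' h' => ?_, hlt.le, .inl hlt⟩
      rw [Tm.subst_app, Tm.subst_app, nf_app, nf_app, List.map_map, List.map_map]
      congr 1
      refine List.map_congr_left fun t ht => h1 t ht σ' fun x hx => h' x ?_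
      exact List.mem_flatMap.2 ⟨t, ht, hx⟩

theorem Suf.comp {r : Tm F} {τ σ : ℕ → Tm F} {l : List ℕ} {φ : ℕ → List ℕ}
    (h : Suf Th r (fun x => (τ x).subst σ) l) (hφ : ∀ x ∈ l, Suf Th (τ x) σ (φ x)) :
    Suf Th (r.subst τ) σ (l.flatMap φ) := by
  intro σ' h'
  rw [Tm.subst_subst, Tm.subst_subst]
  refine h _ fun x hx => hφ x hx σ' fun y hy => h' y ?_
  exact List.mem_flatMap.2 ⟨x, hx, hy⟩

theorem Suf.congr {q q' : Tm F} {σ : ℕ → Tm F} {l : List ℕ} (h : Suf Th q σ l)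
    (hq : nf Th q = nf Th q') : Suf Th q' σ l := by
  intro σ' hx
  rw [← nf_subst_congr_left hq, ← nf_subst_congr_left hq]
  exact h σ' hx

/-- Instantiating `r` by `τ` does not increase the weight of a sufficient list, and decreases it
as soon as some variable in the list is sent neither to a variable nor to a term that is absorbed
at its root. -/
theorem exists_suf_subst {r : Tm F} {τ σ : ℕ → Tm F} {l : List ℕ}
    (h : Suf Th r (fun x => (τ x).subst σ) l) :
    ∃ l', Suf Th (r.subst τ) σ l' ∧ wt Th σ l' ≤ wt Th (fun x => (τ x).subst σ) l ∧
      (wt Th σ l' < wt Th (fun x => (τ x).subst σ) l ∨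
        ∀ x ∈ l, (∃ y, τ x = .var y) ∨
          ∃ f e qs, (f, e) ∈ Th.pairs ∧ τ x = .app f qs ∧
            nf Th ((τ x).subst σ) = .app e []) := by
  choose φ h1 h2 h3 using fun x => exists_suf (Th := Th) σ (τ x)
  refine ⟨l.flatMap φ, h.comp fun x _ => h1 x, ?_, ?_⟩
  · rw [wt_flatMap]
    exact List.sum_le_sum fun x _ => h2 x
  · by_cases hs : ∃ x ∈ l, wt Th σ (φ x) < sizeOf (nf Th ((τ x).subst σ))
    · left
      rw [wt_flatMap]
      exact List.sum_lt_sum _ _ (fun x _ => h2 x) hs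
    · right
      intro x hx
      exact (h3 x).resolve_left fun hlt => hs ⟨x, hx, hlt⟩

/-- Changing `σ` at `x` to a constant `c` keeps the value of `r` if `x` is not in a sufficient
list or already has the value `c`. -/
theorem Suf.single {r : Tm F} {σ : ℕ → Tm F} {l : List ℕ} (h : Suf Th r σ l) {x : ℕ} {c : F}
    (hx : x ∈ l → nf Th (σ x) = .app c []) :
    nf Th ((r.subst (single x (.app c []))).subst σ) = nf Th (r.subst σ) := by
  rw [Tm.subst_subst]
  refine h _ fun z hz => ?_
  by_cases hzx : z = x
  · subst hzx
    simp [AbsAU.single, hx hz]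
  · simp [AbsAU.single, hzx]

/-! ### Every generalization lies below a maximal one -/

/-- A generalization with the least number of variables among all generalizations above it. -/
def Tight (Th : AbsTh Sg) (s t r : Tm F) : Prop :=
  Gen Th r s t ∧ ∀ r', Gen Th r' s t → MoreGen Th r r' → (vars r).ncard ≤ (vars r').ncard

theorem exists_tight {s t r : Tm F} (hr : Gen Th r s t) :
    ∃ r', Tight Th s t r' ∧ MoreGen Th r r' := by
  classical
  have hex : ∃ n, ∃ r', Gen Th r' s t ∧ MoreGen Th r r' ∧ (vars r').ncard = n :=
    ⟨_, r, hr, .refl r, rfl⟩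
  obtain ⟨r', h1, h2, h3⟩ := Nat.find_spec hex
  refine ⟨r', ⟨h1, fun r'' h4 h5 => ?_⟩, h2⟩
  rw [h3]
  exact Nat.find_min' hex ⟨r'', h4, h2.trans h5, rfl⟩

/-- A variable of a tight generalization cannot be instantiated by a constant. -/
theorem Tight.not_gen_single {s t r : Tm F} (hr : Tight Th s t r) {x : ℕ} (hx : VarIn x r)
    (c : F) : ¬ Gen Th (r.subst (single x (.app c []))) s t := by
  intro hg
  have h := hr.2 _ hg (moreGen_subst r (finDom_single x _))
  refine absurd h (not_le.2 (Set.ncard_lt_ncard ?_ (vars_finite r)))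
  refine (Set.ssubset_iff_of_subset ?_).2 ⟨x, hx, ?_⟩
  · rintro y hy
    obtain ⟨z, hz, hyz⟩ := varIn_subst.1 hy
    by_cases hzx : z = x
    · simp [single, hzx, varIn_app] at hyz
    · rw [single, if_neg hzx, varIn_var] at hyz
      subst hyz
      exact hz
  · intro hy
    obtain ⟨z, hz, hyz⟩ := varIn_subst.1 hy
    by_cases hzx : z = x
    · simp [single, hzx, varIn_app] at hyz
    · rw [single, if_neg hzx, varIn_var] at hyz
      exact hzx hyz.symm

/-- An instance of a tight generalization by a substitution that sends its variables to variables
is a renaming of it. -/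
theorem Tight.renaming {s t r : Tm F} (hr : Tight Th s t r) {τ : ℕ → Tm F} (hτ : FinDom τ)
    (hg : Gen Th (r.subst τ) s t) (hv : ∀ x, VarIn x r → ∃ y, τ x = .var y) :
    MoreGen Th (r.subst τ) r := by
  classical
  choose! ν hν using hv
  have himg : vars (r.subst τ) = ν '' vars r := by
    ext y
    simp only [vars, Set.mem_ofPred_eq, varIn_subst, Set.mem_image]
    refine exists_congr fun x => and_congr_right fun hx => ?_
    rw [hν x hx, varIn_var]
    exact eq_comm
  have hinj : Set.InjOn ν (vars r) := by
    refine Set.injOn_of_ncard_image_eq ?_ (vars_finite r)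
    refine le_antisymm (Set.ncard_image_le (vars_finite r)) ?_
    rw [← himg]
    exact hr.2 _ hg (moreGen_subst r hτ)
  let ξ : ℕ → Tm F := fun y => if y ∈ ν '' vars r then .var (Function.invFunOn ν (vars r) y)
    else .var y
  refine ⟨ξ, ?_, ?_⟩
  · refine ((vars_finite r).image ν).subset fun y hy => ?_
    by_contra h
    exact hy (if_neg h)
  · have : (r.subst τ).subst ξ = r := by
      rw [Tm.subst_subst]
      conv_rhs => rw [← subst_id r]
      refine subst_congr fun x hx => ?_
      rw [hν x hx, Tm.subst_var]
      simp only [ξ, Set.mem_image_of_mem ν (show x ∈ vars r from hx), if_true]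
      rw [hinj.leftInvOn_invFunOn hx]
    rw [this]
    exact .refl r

/-- For every pair of substitutions that turns `r` into `s` and into `t`, the value of `r` is
determined by lists of variables of total weight at most `k`. -/
def Bdd (Th : AbsTh Sg) (s t r : Tm F) (k : ℕ) : Prop :=
  ∀ σ ρ : ℕ → Tm F, FinDom σ → FinDom ρ → nf Th (r.subst σ) = nf Th s →
    nf Th (r.subst ρ) = nf Th t →
    ∃ l m, Suf Th r σ l ∧ Suf Th r ρ m ∧ wt Th σ l + wt Th ρ m ≤ k

theorem exists_maximal {s t r₀ : Tm F} (h₀ : Gen Th r₀ s t) :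
    ∃ r, Gen Th r s t ∧ MoreGen Th r₀ r ∧
      ∀ r', Gen Th r' s t → MoreGen Th r r' → MoreGen Th r' r := by
  classical
  have hex : ∃ k, ∃ r, Tight Th s t r ∧ MoreGen Th r₀ r ∧ Bdd Th s t r k := by
    obtain ⟨r, h1, h2⟩ := exists_tight h₀
    refine ⟨sizeOf (nf Th s) + sizeOf (nf Th t), r, h1, h2, fun σ ρ _ _ hs ht => ?_⟩
    obtain ⟨l, hl, hl', _⟩ := exists_suf (Th := Th) σ r
    obtain ⟨m, hm, hm', _⟩ := exists_suf (Th := Th) ρ r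
    rw [hs] at hl'
    rw [ht] at hm'
    exact ⟨l, m, hl, hm, by omega⟩
  obtain ⟨r, hr, h0r, hb⟩ := Nat.find_spec hex
  have hmin := fun k => Nat.find_min hex (m := k)
  generalize Nat.find hex = k at hb hmin
  refine ⟨r, hr.1, h0r, fun r' hr' hrr' => ?_⟩
  obtain ⟨r'', hr'', hr'r''⟩ := exists_tight hr'
  refine hr'r''.trans ?_
  obtain ⟨τ, hτ, hτr⟩ := moreGen_iff.1 (hrr'.trans hr'r'')
  have hg : Gen Th (r.subst τ) s t :=
    MoreGen.gen (moreGen_iff.2 ⟨.var, finDom_var, by rw [subst_id, hτr]⟩) hr''.1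
  have hback : MoreGen Th r'' (r.subst τ) :=
    moreGen_iff.2 ⟨.var, finDom_var, by rw [subst_id, hτr]⟩
  refine hback.trans (hr.renaming hτ hg ?_)
  -- By minimality of `k`, some witnesses `σ`, `ρ` for `r''` admit no lists of weight below `k`.
  have hnb : ∃ σ ρ : ℕ → Tm F, FinDom σ ∧ FinDom ρ ∧ nf Th (r''.subst σ) = nf Th s ∧
      nf Th (r''.subst ρ) = nf Th t ∧
      ∀ l m, Suf Th r'' σ l → Suf Th r'' ρ m → k ≤ wt Th σ l + wt Th ρ m := by
    by_contra hcon
    push Not at hcon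
    obtain ⟨σ₀, hσ₀, hs₀⟩ := moreGen_iff.1 hr''.1.1
    obtain ⟨ρ₀, hρ₀, ht₀⟩ := moreGen_iff.1 hr''.1.2
    obtain ⟨_, _, _, _, hk⟩ := hcon σ₀ ρ₀ hσ₀ hρ₀ hs₀ ht₀
    refine hmin (k - 1) (by omega) ⟨r'', hr'', h0r.trans (hrr'.trans hr'r''), ?_⟩
    intro σ ρ hσ hρ hs ht
    obtain ⟨l, m, hl, hm, hlm⟩ := hcon σ ρ hσ hρ hs ht
    exact ⟨l, m, hl, hm, by omega⟩
  obtain ⟨σ, ρ, hσ, hρ, hs, ht, hk⟩ := hnb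
  have hs' : nf Th (r.subst fun x => (τ x).subst σ) = nf Th s := by
    rw [← Tm.subst_subst, nf_subst_congr_left hτr, hs]
  have ht' : nf Th (r.subst fun x => (τ x).subst ρ) = nf Th t := by
    rw [← Tm.subst_subst, nf_subst_congr_left hτr, ht]
  obtain ⟨l, m, hl, hm, hlm⟩ :=
    hb _ _ (finDom_comp hτ hσ) (finDom_comp hτ hρ) hs' ht'
  obtain ⟨l', hl1, hl2, hl3⟩ := exists_suf_subst hl
  obtain ⟨m', hm1, hm2, hm3⟩ := exists_suf_subst hm
  have hk' := hk l' m' (hl1.congr hτr) (hm1.congr hτr)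
  replace hl3 := hl3.resolve_left (by omega)
  replace hm3 := hm3.resolve_left (by omega)
  -- A variable with a non-variable image could be instantiated by a constant.
  intro x hx
  by_contra hxv
  have hcontra : ∀ c : F, (x ∈ l → nf Th ((τ x).subst σ) = .app c []) →
      (x ∈ m → nf Th ((τ x).subst ρ) = .app c []) → False := by
    intro c hc1 hc2
    refine hr.not_gen_single hx c ⟨moreGen_iff.2 ⟨_, finDom_comp hτ hσ, ?_⟩,
      moreGen_iff.2 ⟨_, finDom_comp hτ hρ, ?_⟩⟩
    · rw [hl.single hc1, hs']
    · rw [hm.single hc2, ht']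
  by_cases hxl : x ∈ l
  · obtain ⟨f, e, qs, hp, hq, he⟩ := (hl3 x hxl).resolve_left hxv
    refine hcontra e (fun _ => he) fun hxm => ?_
    obtain ⟨f', e', qs', hp', hq', he'⟩ := (hm3 x hxm).resolve_left hxv
    rw [hq] at hq'
    obtain ⟨rfl, rfl⟩ := Tm.app.inj hq'
    rw [he', pair_unique Th hp hp']
  · by_cases hxm : x ∈ m
    · obtain ⟨f, e, qs, hp, hq, he⟩ := (hm3 x hxm).resolve_left hxv
      exact hcontra e (fun h => absurd h hxl) fun _ => he
    · exact hcontra Sg.star (fun h => absurd h hxl) fun h => absurd h hxm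

theorem exists_mcsg (s t : Tm F) : ∃ M : Set (Tm F), IsMCSG Th M s t := by
  let S : Setoid (Tm F) :=
    { r := fun r r' => MoreGen Th r r' ∧ MoreGen Th r' r
      iseqv := ⟨fun r => ⟨.refl r, .refl r⟩, fun h => ⟨h.2, h.1⟩,
        fun h h' => ⟨h.1.trans h'.1, h'.2.trans h.2⟩⟩ }
  let rep : Tm F → Tm F := fun r => (Quotient.mk S r).out
  have hrep : ∀ r, MoreGen Th (rep r) r ∧ MoreGen Th r (rep r) := fun r => Quotient.mk_out r
  refine ⟨{q | ∃ r, Gen Th r s t ∧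
    (∀ r', Gen Th r' s t → MoreGen Th r r' → MoreGen Th r' r) ∧ rep r = q}, ?_, ?_, ?_⟩
  · rintro _ ⟨r, hr, _, rfl⟩
    exact (hrep r).1.gen hr
  · intro r₀ hr₀
    obtain ⟨r, h1, h2, h3⟩ := exists_maximal hr₀
    exact ⟨_, ⟨r, h1, h3, rfl⟩, h2.trans (hrep r).2⟩
  · rintro _ ⟨r, hr, hm, rfl⟩ _ ⟨r', hr', _, rfl⟩ h
    have h' : MoreGen Th r r' := (hrep r).2.trans (h.trans (hrep r').1)
    have hq : Quotient.mk S r = Quotient.mk S r' := Quotient.sound ⟨h', hm r' hr' h'⟩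
    simp only [rep, hq]

/-! ### An infinite family of maximal generalizations -/

theorem nrm_plain {k : F} (hk : ∀ p ∈ Th.pairs, k ≠ p.1) (us : List (Tm F)) :
    nrm Th k us = .app k us :=
  nrm_not_abs fun ⟨_, hp, _⟩ => hk _ hp rfl

open Classical in
theorem nrm_pair {f e : F} (hp : (f, e) ∈ Th.pairs) (u v : Tm F) :
    nrm Th f [u, v] = if u = .app e [] ∨ v = .app e [] then .app e [] else .app f [u, v] := by
  split_ifs with h
  · exact nrm_abs hp rfl (by rcases h with rfl | rfl <;> simp)
  · refine nrm_not_abs ?_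
    rintro ⟨e', hp', _, hm⟩
    rw [pair_unique Th hp hp'] at h
    simp only [List.mem_cons, List.not_mem_nil, or_false] at hm
    exact h (hm.imp Eq.symm Eq.symm)

/-- The tower `f(… f(f(v, u), u) …, u)` with `n` occurrences of `f`. -/
def tower (f : F) (v u : Tm F) : ℕ → Tm F
  | 0 => v
  | n + 1 => .app f [tower f v u n, u]

theorem tower_subst (f : F) (v u : Tm F) (σ : ℕ → Tm F) (n : ℕ) :
    (tower f v u n).subst σ = tower f (v.subst σ) (u.subst σ) n := by
  induction n with
  | zero => rfl
  | succ n ih => simp [tower, ih]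

theorem nf_tower_absorb {f e : F} (hp : (f, e) ∈ Th.pairs) (u : Tm F) (n : ℕ) :
    nf Th (tower f (.app e []) u n) = .app e [] := by
  induction n with
  | zero => simp [tower]
  | succ n ih => simp [tower, ih, nrm_pair hp]

theorem nf_tower_var {f e : F} (hp : (f, e) ∈ Th.pairs) (x y n : ℕ) :
    nf Th (tower f (.var x) (.var y) n) = tower f (.var x) (.var y) n := by
  induction n with
  | zero => simp [tower]
  | succ n ih =>
    have : tower f (.var x) (.var y : Tm F) n ≠ .app e [] := by
      cases n <;> simp [tower]
    simp [tower, ih, nrm_pair hp, this]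

theorem tower_inj {f : F} {x y x' y' : ℕ} : ∀ {n m : ℕ},
    tower f (.var x) (.var y) n = tower f (.var x') (.var y') m → n = m
  | 0, 0, _ => rfl
  | 0, m + 1, h => by simp [tower] at h
  | n + 1, 0, h => by simp [tower] at h
  | n + 1, m + 1, h => by
    simp only [tower, Tm.app.injEq, List.cons.injEq, true_and] at h
    rw [tower_inj h.1]

/-- The generalization `g(f(h(tower_n(z, y)), y), f(z, h(ε_f)))` of the two terms; `y` is the
variable `0` and `z` the variable `1`. -/
def fam (f e g h : F) (n : ℕ) : Tm F :=
  .app g [.app f [.app h [tower f (.var 1) (.var 0) n], .var 0],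
    .app f [.var 1, .app h [.app e []]]]

/-- A common generalization of a constant `a` outside the theory and another constant `e` is a
variable. -/
theorem eq_var_of_gen {a e : F} (ha : ∀ p ∈ Th.pairs, a ≠ p.2) (hae : a ≠ e) {q : Tm F}
    {α β : ℕ → Tm F} (h1 : nf Th (q.subst α) = .app a []) (h2 : nf Th (q.subst β) = .app e []) :
    ∃ x, q = .var x := by
  cases q with
  | var x => exact ⟨x, rfl⟩
  | app k us =>
    exfalso
    rw [Tm.subst_app, nf_app] at h1 h2
    by_cases h : ∃ e, (k, e) ∈ Th.pairs ∧
        ((us.map (Tm.subst α)).map (nf Th)).length = 2 ∧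
        Tm.app e [] ∈ (us.map (Tm.subst α)).map (nf Th)
    · obtain ⟨e', hp, hl, hm⟩ := h
      rw [nrm_abs hp hl hm] at h1
      exact ha _ hp (Tm.app.inj h1).1.symm
    · rw [nrm_not_abs h] at h1
      obtain ⟨rfl, hus⟩ := Tm.app.inj h1
      obtain rfl : us = [] := by simpa using hus
      simp only [List.map_nil, nrm_nil, Tm.app.injEq, and_true] at h2
      exact hae h2

variable {f e g h a : F}

theorem fam_gen (hp : (f, e) ∈ Th.pairs) (hhe : h ≠ e) (hae : a ≠ e)
    (hg : ∀ p ∈ Th.pairs, g ≠ p.1) (hh : ∀ p ∈ Th.pairs, h ≠ p.1) (n : ℕ) :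
    Gen Th (fam f e g h n)
      (.app g [.app e [], .app f [.app a [], .app h [.app e []]]])
      (.app g [.app f [.app h [.app e []], .app a []], .app e []]) := by
  have hfd : ∀ u v : Tm F, FinDom (fun x => if x = 0 then u else if x = 1 then v else .var x) := by
    intro u v
    refine (Set.toFinite {0, 1}).subset fun x hx => ?_
    by_contra hx'
    simp only [Set.mem_insert_iff, Set.mem_singleton_iff, not_or] at hx'
    simp [Dom, hx'] at hx
  refine ⟨moreGen_iff.2 ⟨_, hfd (.app e []) (.app a []), ?_⟩,
    moreGen_iff.2 ⟨_, hfd (.app a []) (.app e []), ?_⟩⟩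
  · simp [fam, nrm_pair hp, nrm_plain hg, nrm_plain hh, hae, hhe]
  · simp [fam, tower_subst, nf_tower_absorb hp, nrm_pair hp, nrm_plain hg, nrm_plain hh, hae, hhe]

/-- Any substitution that keeps `fam n` a generalization sends its variables to variables. -/
theorem fam_subst (hp : (f, e) ∈ Th.pairs) (hhe : h ≠ e) (hae : a ≠ e)
    (hg : ∀ p ∈ Th.pairs, g ≠ p.1) (hh : ∀ p ∈ Th.pairs, h ≠ p.1)
    (ha : ∀ p ∈ Th.pairs, a ≠ p.2) {n : ℕ} {σ : ℕ → Tm F}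
    (hgen : Gen Th ((fam f e g h n).subst σ)
      (.app g [.app e [], .app f [.app a [], .app h [.app e []]]])
      (.app g [.app f [.app h [.app e []], .app a []], .app e []])) :
    (∃ u, σ 0 = .var u) ∧ ∃ v, σ 1 = .var v := by
  have hfe : f ≠ e := Th.ne _ hp
  obtain ⟨⟨α, _, hα⟩, ⟨β, _, hβ⟩⟩ := hgen
  rw [absEq_iff] at hα hβ
  simp only [fam, Tm.subst_app, List.map_cons, List.map_nil, Tm.subst_var, nf_app,
    nrm_pair hp, nrm_plain hg, nrm_plain hh, nrm_nil, Tm.app.injEq, hhe, hae, false_and,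
    false_or, or_false, if_false, true_and, List.cons.injEq, and_true] at hα hβ
  have hy1 : nf Th ((σ 0).subst α) = .app e [] := by
    by_contra hc
    simp [hc, hfe] at hα
  have hz1 : nf Th ((σ 1).subst α) = .app a [] := by
    by_cases hc : nf Th ((σ 1).subst α) = .app e []
    · simp [hc, hfe.symm] at hα
    · simpa [hc] using hα.2
  have hz2 : nf Th ((σ 1).subst β) = .app e [] := by
    by_contra hc
    simp [hc, hfe] at hβ
  have hy2 : nf Th ((σ 0).subst β) = .app a [] := by
    by_cases hc : nf Th ((σ 0).subst β) = .app e []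
    · simp [hc, hfe.symm] at hβ
    · have := hβ.1
      simp only [hc, or_false, Tm.app.injEq, hhe, false_and, if_false, List.cons.injEq,
        and_true, true_and] at this
      exact this.2
  exact ⟨eq_var_of_gen ha hae hy2 hy1, eq_var_of_gen ha hae hz1 hz2⟩

theorem infinite_mcsg (hp : (f, e) ∈ Th.pairs) (hhe : h ≠ e) (hae : a ≠ e)
    (hg : ∀ p ∈ Th.pairs, g ≠ p.1) (hh : ∀ p ∈ Th.pairs, h ≠ p.1)
    (ha : ∀ p ∈ Th.pairs, a ≠ p.2) {M : Set (Tm F)}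
    (hM : IsMCSG Th M
      (.app g [.app e [], .app f [.app a [], .app h [.app e []]]])
      (.app g [.app f [.app h [.app e []], .app a []], .app e []])) :
    M.Infinite := by
  choose φ hφM hφ using fun n => hM.2.1 (fam f e g h n) (fam_gen hp hhe hae hg hh n)
  refine Set.infinite_of_injective_forall_mem (f := φ) ?_ hφM
  intro n m hnm
  -- Both `fam n` and `fam m` have the instance `φ n`, which is a renaming of each of them.
  have key : ∀ k, φ k = φ n → ∃ u v, nf Th (φ n) = .app g [.app f
      [.app h [tower f (.var v) (.var u) k], .var u], .app f [.var v, .app h [.app e []]]] := by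
    intro k hk
    have hk' := hφ k
    rw [hk] at hk'
    obtain ⟨σ, hσ, hσn⟩ := moreGen_iff.1 hk'
    have hgen := MoreGen.gen (moreGen_iff.2 ⟨.var, finDom_var, by rw [subst_id, hσn]⟩)
      (hM.1 (hφM n))
    obtain ⟨⟨u, hu⟩, ⟨v, hv⟩⟩ := fam_subst hp hhe hae hg hh ha hgen
    refine ⟨u, v, ?_⟩
    rw [← hσn]
    simp [fam, tower_subst, hu, hv, nf_tower_var hp, nrm_pair hp, nrm_plain hg, nrm_plain hh, hhe]
  obtain ⟨u, v, h1⟩ := key n rfl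
  obtain ⟨u', v', h2⟩ := key m hnm.symm
  rw [h1] at h2
  simp only [Tm.app.injEq, List.cons.injEq, true_and, and_true] at h2
  exact tower_inj h2.1.1

end

/-- anti-unification modulo absorption theories is infinitary:
minimal complete sets of `Abs`-generalizations always exist, and for a
signature containing an absorption pair `(f, ε_f)`, an (ordinary) binary symbol
`g`, unary symbol `h` and constant `a`, all pairwise distinct and distinct from
`ε_f`, every minimal complete set of `Abs`-generalizations of
`g(ε_f, f(a, h(ε_f)))` and `g(f(h(ε_f), a), ε_f)` is infinite. -/
theorem abs_antiunification_infinitary {F : Type} {Sg : AbsSig F} (Th : AbsTh Sg) :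
    (∀ s t : Tm F, ∃ M : Set (Tm F), IsMCSG Th M s t) ∧
    (∀ f e g h a : F, (f, e) ∈ Th.pairs →
      Sg.arity g = 2 → Sg.arity h = 1 → Sg.arity a = 0 →
      g ≠ h → g ≠ a → h ≠ a → g ≠ e → h ≠ e → a ≠ e →
      (∀ p ∈ Th.pairs, g ≠ p.1 ∧ g ≠ p.2 ∧ h ≠ p.1 ∧ h ≠ p.2 ∧ a ≠ p.1 ∧ a ≠ p.2) →
      ∀ M : Set (Tm F),
        IsMCSG Th M
          (Tm.app g [Tm.app e [], Tm.app f [Tm.app a [], Tm.app h [Tm.app e []]]])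
          (Tm.app g [Tm.app f [Tm.app h [Tm.app e []], Tm.app a []], Tm.app e []]) →
        M.Infinite) := by
  refine ⟨exists_mcsg, ?_⟩
  intro f e g h a hp _ _ _ _ _ _ _ hhe hae hout M hM
  exact infinite_mcsg hp hhe hae (fun p h => (hout p h).1) (fun p h => (hout p h).2.2.1)
    (fun p h => (hout p h).2.2.2.2.2) hM

end AbsAU
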